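/- Let 𝔸 be an ω-categorical model-complete core that is preserved by a chain of quasi Jónsson operations (J_1,…,J_{2n+1}). Then for every finite subset B of the domain of 𝔸 there exists a chain of quasi Jónsson operations (J′_1,…,J′_{2n+1}) consisting of polymorphisms of 𝔸 such that every J′_i is idempotent on B, i.e., J′_i(b,b,b) = b for all b ∈ B. -/

import Mathlib

/-!
Common framework: relational structures, orbits, neoliberal permutation groups,
finite duality / finite boundedness, primitive-positive definability, implications,
implication graphs, quasi Jónsson chains, CSP instances and relational width.
-/

/-- A relational structure on domain `A`, given by its set of finitary relations. -/
structure RelStruct (A : Type) where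
  rels : Set (Σ n : ℕ, Set (Fin n → A))

namespace CSP

variable {A : Type}

/-- `g` is an automorphism of `𝔸`: it preserves every relation in both directions. -/
def IsAut (𝔸 : RelStruct A) (g : Equiv.Perm A) : Prop :=
  ∀ r ∈ 𝔸.rels, ∀ t : Fin r.1 → A, t ∈ r.2 ↔ (fun i => g (t i)) ∈ r.2

/-- The orbit of a `k`-tuple under a permutation group. -/
def orbitOf (G : Subgroup (Equiv.Perm A)) {k : ℕ} (t : Fin k → A) : Set (Fin k → A) :=
  {s | ∃ g ∈ G, s = fun i => g (t i)}

/-- `O` is an orbit of `k`-tuples under `G`. -/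
def IsOrbit (G : Subgroup (Equiv.Perm A)) {k : ℕ} (O : Set (Fin k → A)) : Prop :=
  ∃ t, O = orbitOf G t

/-- `G` is oligomorphic: finitely many orbits of `k`-tuples for every `k`. -/
def Oligomorphic (G : Subgroup (Equiv.Perm A)) : Prop :=
  ∀ k : ℕ, {O : Set (Fin k → A) | IsOrbit G O}.Finite

/-- `G` has exactly one orbit on injective `m`-tuples. -/
def IsTransitiveOn (G : Subgroup (Equiv.Perm A)) (m : ℕ) : Prop :=
  ∀ s t : Fin m → A, Function.Injective s → Function.Injective t →
    ∃ g ∈ G, ∀ i, g (s i) = t i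

/-- `G` is `k`-homogeneous: for every `ℓ ≥ k` the orbit of an `ℓ`-tuple is determined
by the orbits of its `k`-subtuples. -/
def IsHomogeneousAt (G : Subgroup (Equiv.Perm A)) (k : ℕ) : Prop :=
  ∀ ℓ : ℕ, k ≤ ℓ → ∀ s t : Fin ℓ → A,
    (∀ σ : Fin k → Fin ℓ, ∃ g ∈ G, ∀ i, g (s (σ i)) = t (σ i)) →
    ∃ g ∈ G, ∀ i, g (s i) = t i

/-- `G` has no `k`-algebraicity: the only points fixed by the pointwise stabilizer of any
`k-1` elements are those elements themselves. -/
def NoAlgebraicity (G : Subgroup (Equiv.Perm A)) (k : ℕ) : Prop :=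
  ∀ (t : Fin (k - 1) → A) (a : A),
    (∀ g ∈ G, (∀ i, g (t i) = t i) → g a = a) → ∃ i, a = t i

/-- `G` is `k`-neoliberal. -/
def IsNeoliberal (G : Subgroup (Equiv.Perm A)) (k : ℕ) : Prop :=
  Oligomorphic G ∧ IsTransitiveOn G (k - 1) ∧ IsHomogeneousAt G k ∧ NoAlgebraicity G k

/-- The canonical `k`-ary structure of `G`: its relations are exactly the orbits of
`k`-tuples under `G`. -/
def canonicalRelStruct (G : Subgroup (Equiv.Perm A)) (k : ℕ) : RelStruct A :=
  ⟨{r | ∃ O : Set (Fin k → A), IsOrbit G O ∧ r = ⟨k, O⟩}⟩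

/-- A relation is invariant under the group `G` (the semantic counterpart of
first-order definability over the ω-categorical canonical structure of `G`). -/
def GInvariant (G : Subgroup (Equiv.Perm A)) {n : ℕ} (R : Set (Fin n → A)) : Prop :=
  ∀ g ∈ G, ∀ t ∈ R, (fun i => g (t i)) ∈ R

/-- `𝔸` is an expansion of the canonical `k`-ary structure of `G` by first-order
definable (= `G`-invariant) relations. -/
def IsFOExpansion (G : Subgroup (Equiv.Perm A)) (k : ℕ) (𝔸 : RelStruct A) : Prop :=
  (canonicalRelStruct G k).rels ⊆ 𝔸.rels ∧ ∀ r ∈ 𝔸.rels, GInvariant G r.2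

/-! ### Structures in the signature of the canonical `k`-ary structure -/

/-- A structure with `k`-ary relation symbols indexed by `ι`, on domain `X`. -/
structure SigStructOn (ι : Type) (k : ℕ) (X : Type) where
  rel : ι → Set (Fin k → X)

/-- The index type of the relations of the canonical `k`-ary structure. -/
def OrbIdx (G : Subgroup (Equiv.Perm A)) (k : ℕ) := {O : Set (Fin k → A) // IsOrbit G O}

/-- The canonical `k`-ary structure of `G`, viewed as a structure in its own signature. -/
def canonicalOn (G : Subgroup (Equiv.Perm A)) (k : ℕ) : SigStructOn (OrbIdx G k) k A :=
  ⟨fun O => O.val⟩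

/-- Homomorphism of structures in a common signature. -/
def IsHomOn {ι X Y : Type} {k : ℕ} (S : SigStructOn ι k X) (T : SigStructOn ι k Y)
    (h : X → Y) : Prop :=
  ∀ i : ι, ∀ t ∈ S.rel i, (fun j => h (t j)) ∈ T.rel i

/-- Embedding of structures in a common signature. -/
def IsEmbOn {ι X Y : Type} {k : ℕ} (S : SigStructOn ι k X) (T : SigStructOn ι k Y)
    (h : X → Y) : Prop :=
  Function.Injective h ∧ ∀ i : ι, ∀ t : Fin k → X, t ∈ S.rel i ↔ (fun j => h (t j)) ∈ T.rel i

/-- The canonical `k`-ary structure of `G` has finite duality. -/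
def HasFiniteDuality (G : Subgroup (Equiv.Perm A)) (k : ℕ) : Prop :=
  ∃ F : Set ((X : Type) × SigStructOn (OrbIdx G k) k X),
    F.Finite ∧ (∀ p ∈ F, Finite p.1) ∧
      ∀ (X : Type), Finite X → ∀ SX : SigStructOn (OrbIdx G k) k X,
        ((∃ h : X → A, IsHomOn SX (canonicalOn G k) h) ↔
          ∀ p ∈ F, ¬ ∃ h : p.1 → X, IsHomOn p.2 SX h)

/-- `F` witnesses finite boundedness of the canonical `k`-ary structure of `G`. -/
def FinBoundedWitness (G : Subgroup (Equiv.Perm A)) (k : ℕ)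
    (F : Set ((X : Type) × SigStructOn (OrbIdx G k) k X)) : Prop :=
  F.Finite ∧ (∀ p ∈ F, Finite p.1) ∧
    ∀ (X : Type), Finite X → ∀ SX : SigStructOn (OrbIdx G k) k X,
      ((∃ h : X → A, IsEmbOn SX (canonicalOn G k) h) ↔
        ∀ p ∈ F, ¬ ∃ h : p.1 → X, IsEmbOn p.2 SX h)

/-- The canonical `k`-ary structure of `G` is finitely bounded. -/
def FinitelyBounded (G : Subgroup (Equiv.Perm A)) (k : ℕ) : Prop :=
  ∃ F, FinBoundedWitness G k F

/-- `b_𝔹`: the least possible size of the largest structure in a set of bounds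
witnessing finite boundedness. -/
noncomputable def boundSize (G : Subgroup (Equiv.Perm A)) (k : ℕ) : ℕ :=
  sInf {b : ℕ | ∃ F, FinBoundedWitness G k F ∧ ∀ p ∈ F, Nat.card p.1 ≤ b}

/-! ### Primitive positive definability -/

/-- An atomic pp-condition on assignments `V → A`: a relation of `𝔸` applied to a
tuple of variables, or an equality between two variables. -/
inductive PPAtom (𝔸 : RelStruct A) (V : Type) : Type
  | rel (r : Σ n : ℕ, Set (Fin n → A)) (hr : r ∈ 𝔸.rels) (vars : Fin r.1 → V) : PPAtom 𝔸 V
  | eq (x y : V) : PPAtom 𝔸 V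

/-- Satisfaction of an atomic pp-condition. -/
def PPAtom.sat {𝔸 : RelStruct A} {V : Type} : PPAtom 𝔸 V → (V → A) → Prop
  | PPAtom.rel r _ vars => fun f => (fun i => f (vars i)) ∈ r.2
  | PPAtom.eq x y => fun f => f x = f y

/-- `Φ` is the set of satisfying assignments of a primitive positive formula over `𝔸`
with free variable set `V` (a finite conjunction of atoms, existentially projected). -/
def IsPPDefinable (𝔸 : RelStruct A) {V : Type} (Φ : Set (V → A)) : Prop :=
  ∃ (W : Type) (_ : Finite W) (ι : Type) (_ : Finite ι)
      (atoms : ι → PPAtom 𝔸 (V ⊕ W)),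
    Φ = {f | ∃ g : V ⊕ W → A, (∀ i, (atoms i).sat g) ∧ ∀ x, g (Sum.inl x) = f x}

/-! ### Polymorphisms and quasi Jónsson chains -/

/-- A unary operation preserves a relation. -/
def PreservesUn (f : A → A) {n : ℕ} (R : Set (Fin n → A)) : Prop :=
  ∀ t ∈ R, (fun i => f (t i)) ∈ R

/-- A binary operation preserves a relation. -/
def PreservesBin (f : A → A → A) {n : ℕ} (R : Set (Fin n → A)) : Prop :=
  ∀ t₁ t₂ : Fin n → A, t₁ ∈ R → t₂ ∈ R → (fun i => f (t₁ i) (t₂ i)) ∈ R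

/-- A ternary operation preserves a relation. -/
def PreservesTern (f : A → A → A → A) {n : ℕ} (R : Set (Fin n → A)) : Prop :=
  ∀ t₁ t₂ t₃ : Fin n → A, t₁ ∈ R → t₂ ∈ R → t₃ ∈ R →
    (fun i => f (t₁ i) (t₂ i) (t₃ i)) ∈ R

def IsUnPolymorphism (𝔸 : RelStruct A) (f : A → A) : Prop :=
  ∀ r ∈ 𝔸.rels, PreservesUn f r.2

def IsBinPolymorphism (𝔸 : RelStruct A) (f : A → A → A) : Prop :=
  ∀ r ∈ 𝔸.rels, PreservesBin f r.2

def IsTernPolymorphism (𝔸 : RelStruct A) (f : A → A → A → A) : Prop :=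
  ∀ r ∈ 𝔸.rels, PreservesTern f r.2

/-- `(J 1, …, J (2n+1))` is a chain of quasi Jónsson operations. -/
structure IsQuasiJonssonChain (A : Type) (n : ℕ) (J : ℕ → A → A → A → A) : Prop where
  first : ∀ x y : A, J 1 x x y = J 1 x x x
  middle : ∀ i, 1 ≤ i → i ≤ 2 * n + 1 → ∀ x y : A, J i x y x = J i x x x
  oddEven : ∀ i, 1 ≤ i → i ≤ n → ∀ x y : A, J (2 * i - 1) x y y = J (2 * i) x y y
  evenOdd : ∀ i, 1 ≤ i → i ≤ n → ∀ x y : A, J (2 * i) x x y = J (2 * i + 1) x x y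
  last : ∀ x y : A, J (2 * n + 1) x y y = J (2 * n + 1) y y y

/-- `𝔸` is preserved by a chain of quasi Jónsson operations. -/
def PreservedByQuasiJonsson (𝔸 : RelStruct A) : Prop :=
  ∃ (n : ℕ) (J : ℕ → A → A → A → A), IsQuasiJonssonChain A n J ∧
    ∀ i, 1 ≤ i → i ≤ 2 * n + 1 → IsTernPolymorphism 𝔸 (J i)

/-! ### ω-categoricity and model-complete cores -/

/-- `𝔸` is ω-categorical: its automorphism group is oligomorphic. -/
def IsOmegaCategorical (𝔸 : RelStruct A) : Prop :=
  ∀ k : ℕ, {O : Set (Fin k → A) |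
    ∃ t : Fin k → A, O = {s | ∃ g : Equiv.Perm A, IsAut 𝔸 g ∧ s = fun i => g (t i)}}.Finite

/-- `𝔸` is an ω-categorical model-complete core. -/
def IsModelCompleteCore (𝔸 : RelStruct A) : Prop :=
  IsOmegaCategorical 𝔸 ∧
    ∀ e : A → A, IsUnPolymorphism 𝔸 e →
      ∀ B : Set A, B.Finite → ∃ g : Equiv.Perm A, IsAut 𝔸 g ∧ ∀ b ∈ B, g b = e b

/-! ### Implications -/

/-- Projection of a set of assignments onto a tuple of variables. -/
def projTup {V : Type} {k : ℕ} (u : Fin k → V) (Φ : Set (V → A)) : Set (Fin k → A) :=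
  (fun f : V → A => f ∘ u) '' Φ

/-- `Φ` (the solution set of a pp-formula over `𝔸` with free variables `V`) is a
`(C,u,D,v)`-pre-implication: conditions (2)–(5) of the definition of an implication. -/
structure IsPreImplication (𝔸 : RelStruct A) {V : Type} {k m : ℕ}
    (C : Set (Fin k → A)) (u : Fin k → V)
    (D : Set (Fin m → A)) (v : Fin m → V) (Φ : Set (V → A)) : Prop where
  V_fin : Finite V
  pp : IsPPDefinable 𝔸 Φ
  u_inj : Function.Injective u
  v_inj : Function.Injective v
  k_lt : k < Nat.card V
  m_lt : m < Nat.card V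
  scopes : Set.range u ∪ Set.range v = Set.univ
  C_ne : C.Nonempty
  D_ne : D.Nonempty
  C_pp : IsPPDefinable 𝔸 C
  D_pp : IsPPDefinable 𝔸 D
  C_ssub : C ⊂ projTup u Φ
  D_ssub : D ⊂ projTup v Φ
  forward : ∀ f ∈ Φ, f ∘ u ∈ C → f ∘ v ∈ D
  onto : ∀ t ∈ D, ∃ f ∈ Φ, f ∘ u ∈ C ∧ f ∘ v = t

/-- `Φ` is a `(C,u,D,v)`-implication in `𝔸`. -/
structure IsImplication (𝔸 : RelStruct A) {V : Type} {k m : ℕ}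
    (C : Set (Fin k → A)) (u : Fin k → V)
    (D : Set (Fin m → A)) (v : Fin m → V) (Φ : Set (V → A))
    extends IsPreImplication 𝔸 C u D v Φ : Prop where
  nondiag : ∀ x y : V, x ≠ y → ∃ f ∈ Φ, f x ≠ f y

/-- A vertex of the `k`-ary injective implication graph of `𝔸`. -/
def InjImplVertex (𝔸 : RelStruct A) (k : ℕ)
    (p : Set (Fin k → A) × Set (Fin k → A)) : Prop :=
  p.2.Nonempty ∧ p.2 ⊂ p.1 ∧ IsPPDefinable 𝔸 p.1 ∧ IsPPDefinable 𝔸 p.2 ∧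
    ∀ t ∈ p.1, Function.Injective t

/-- An arc of the `k`-ary injective implication graph of `𝔸`. -/
def InjImplArc (𝔸 : RelStruct A) (k : ℕ)
    (p q : Set (Fin k → A) × Set (Fin k → A)) : Prop :=
  InjImplVertex 𝔸 k p ∧ InjImplVertex 𝔸 k q ∧ p ≠ q ∧
    ∃ (V : Type) (u v : Fin k → V) (Φ : Set (V → A)),
      IsImplication 𝔸 p.2 u q.2 v Φ ∧ (∀ f ∈ Φ, Function.Injective f) ∧
      projTup u Φ = p.1 ∧ projTup v Φ = q.1

/-- A directed graph (given by its arc relation) has a directed cycle. -/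
def HasDirectedCycle {α : Type*} (arc : α → α → Prop) : Prop :=
  ∃ (n : ℕ) (c : ℕ → α), 0 < n ∧ (∀ i < n, arc (c i) (c (i + 1))) ∧ c n = c 0

/-- `𝔸` is implicationally simple on injective instances: its `k`-ary injective
implication graph is acyclic. -/
def ImplSimpleOnInj (𝔸 : RelStruct A) (k : ℕ) : Prop :=
  ¬ HasDirectedCycle (InjImplArc 𝔸 k)

/-! ### Composition of implications -/

/-- The set of variables of the composition `φ₁ ∘ φ₂` (identification `v¹ = u²` being
realized inside a common ambient variable type). -/
def compDomain {V : Type} (V₁ V₂ : Set V) {k p : ℕ}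
    (u1 : Fin k → ↥V₁) (v2 : Fin p → ↥V₂) : Set V :=
  Set.range (fun i => (u1 i : V)) ∪ Set.range (fun i => (v2 i : V))

def compU {V : Type} (V₁ V₂ : Set V) {k p : ℕ}
    (u1 : Fin k → ↥V₁) (v2 : Fin p → ↥V₂) : Fin k → ↥(compDomain V₁ V₂ u1 v2) :=
  fun i => ⟨(u1 i : V), Set.mem_union_left _ ⟨i, rfl⟩⟩

def compV {V : Type} (V₁ V₂ : Set V) {k p : ℕ}
    (u1 : Fin k → ↥V₁) (v2 : Fin p → ↥V₂) : Fin p → ↥(compDomain V₁ V₂ u1 v2) :=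
  fun i => ⟨(v2 i : V), Set.mem_union_right _ ⟨i, rfl⟩⟩

/-- The solution set of the composition `φ₁ ∘ φ₂`: conjunction followed by existential
quantification of all variables outside `scope(u¹) ∪ scope(v²)`. -/
def compSet {V : Type} (V₁ V₂ : Set V) {k p : ℕ}
    (u1 : Fin k → ↥V₁) (v2 : Fin p → ↥V₂)
    (Φ₁ : Set (↥V₁ → A)) (Φ₂ : Set (↥V₂ → A)) :
    Set (↥(compDomain V₁ V₂ u1 v2) → A) :=
  {f | ∃ g : V → A, (fun x : ↥V₁ => g x) ∈ Φ₁ ∧ (fun x : ↥V₂ => g x) ∈ Φ₂ ∧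
        ∀ x : ↥(compDomain V₁ V₂ u1 v2), f x = g x}

/-! ### Complete implications and critical formulas -/

/-- The gluing relation identifying the `v`-variables of a first copy of `V` with the
`u`-variables of a second copy (used to form `φ ∘ φ`). -/
def glueRel {V : Type} {k : ℕ} (u v : Fin k → V) : (V ⊕ V) → (V ⊕ V) → Prop :=
  fun a b => ∃ i, a = Sum.inl (v i) ∧ b = Sum.inr (u i)

/-- The number of variables of `φ ∘ φ`. -/
noncomputable def compVarCount {V : Type} {k : ℕ} (u v : Fin k → V) : ℕ :=
  Nat.card ↥(Set.range (fun i => Quot.mk (glueRel u v) (Sum.inl (u i))) ∪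
      Set.range (fun i => Quot.mk (glueRel u v) (Sum.inr (v i))))

/-- An arc of the digraph `ℬ_φ` on the orbits contained in `proj_u(φ)`. -/
def OrbArc (G : Subgroup (Equiv.Perm A)) {V : Type} {k : ℕ}
    (u v : Fin k → V) (Φ : Set (V → A)) (O P : Set (Fin k → A)) : Prop :=
  IsOrbit G O ∧ IsOrbit G P ∧ O ⊆ projTup u Φ ∧ P ⊆ projTup u Φ ∧
    ∃ f ∈ Φ, f ∘ u ∈ O ∧ f ∘ v ∈ P

/-- `S` is a strongly connected component of the digraph `ℬ_φ`. -/
def IsSCC (G : Subgroup (Equiv.Perm A)) {V : Type} {k : ℕ}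
    (u v : Fin k → V) (Φ : Set (V → A)) (S : Set (Set (Fin k → A))) : Prop :=
  (∀ O ∈ S, IsOrbit G O ∧ O ⊆ projTup u Φ) ∧
  (∀ O ∈ S, ∀ P ∈ S, Relation.TransGen (OrbArc G u v Φ) O P) ∧
  (∀ S' : Set (Set (Fin k → A)), S ⊆ S' →
    (∀ O ∈ S', IsOrbit G O ∧ O ⊆ projTup u Φ) →
    (∀ O ∈ S', ∀ P ∈ S', Relation.TransGen (OrbArc G u v Φ) O P) → S' = S)

/-- The `(C,u,C,v)`-implication (with solution set `Φ`) is complete. -/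
structure IsComplete (G : Subgroup (Equiv.Perm A)) {V : Type} {k : ℕ}
    (u v : Fin k → V) (Φ : Set (V → A)) : Prop where
  card_comp : compVarCount u v = Nat.card V
  overlap : ∀ i, u i ∈ Set.range v → u i = v i
  scc_full : ∀ S, IsSCC G u v Φ S → ∀ O ∈ S, ∀ P ∈ S, ∃ f ∈ Φ, f ∘ u ∈ O ∧ f ∘ v ∈ P

/-- `Φ` is critical in `𝔸` over `(C,D,u,v)`. -/
structure IsCritical (𝔸 : RelStruct A) (G : Subgroup (Equiv.Perm A)) {V : Type} {k : ℕ}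
    (C D : Set (Fin k → A)) (u v : Fin k → V) (Φ : Set (V → A)) : Prop where
  card_V : Nat.card V = k + 1
  C_inj : ∀ t ∈ C, Function.Injective t
  D_inj : ∀ t ∈ D, Function.Injective t
  disj : Disjoint C D
  D_pp : IsPPDefinable 𝔸 D
  u0 : ∀ h : 0 < k, u ⟨0, h⟩ ∉ Set.range v
  v0 : ∀ h : 0 < k, v ⟨0, h⟩ ∉ Set.range u
  impl : IsImplication 𝔸 C u C v Φ
  complete : IsComplete G u v Φ
  full_C : ∀ f : V → A, f ∘ u ∈ C → f ∘ v ∈ C → f ∈ Φ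
  full_D : ∀ f : V → A, f ∘ u ∈ D → f ∘ v ∈ D → f ∈ Φ

/-- An injective orbital: an orbit of injective pairs. -/
def InjOrbital (G : Subgroup (Equiv.Perm A)) (O : Set (Fin 2 → A)) : Prop :=
  IsOrbit G O ∧ ∀ t ∈ O, Function.Injective t

/-! ### CSP instances and relational width -/

/-- A constraint on variables `V` over domain `A`. -/
structure Constraint (A : Type) (V : Type) where
  scope : Set V
  val : Set (↥scope → A)

variable {V : Type}

/-- The constraint arises from a relation of the template `𝔸` via an enumeration of
its scope. -/
def Constraint.FromTemplate (C : Constraint A V) (𝔸 : RelStruct A) : Prop :=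
  ∃ r ∈ 𝔸.rels, ∃ e : Fin r.1 ≃ ↥C.scope, C.val = {f | (fun i => f (e i)) ∈ r.2}

/-- The constraint arises from a pp-definable relation of arity at most
`max(ℓ, maximal arity of 𝔸)`. -/
def Constraint.FromPPExpansion (C : Constraint A V) (𝔸 : RelStruct A) (ℓ : ℕ) : Prop :=
  ∃ (n : ℕ) (R : Set (Fin n → A)), IsPPDefinable 𝔸 R ∧
    (n ≤ ℓ ∨ ∃ r ∈ 𝔸.rels, n ≤ r.1) ∧
    ∃ e : Fin n ≃ ↥C.scope, C.val = {f | (fun i => f (e i)) ∈ R}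

/-- Projection of a constraint onto a tuple of variables in its scope. -/
def Constraint.projOn (C : Constraint A V) {m : ℕ} (u : Fin m → V)
    (h : ∀ i, u i ∈ C.scope) : Set (Fin m → A) :=
  {t | ∃ f ∈ C.val, ∀ i, t i = f ⟨u i, h i⟩}

/-- An instance of a CSP: a finite set of constraints. -/
structure CSPInstance (A : Type) (V : Type) where
  cons : Set (Constraint A V)
  fin : cons.Finite

/-- The instance is an instance of `CSP(𝔸)`. -/
def CSPInstance.IsInstanceOf (I : CSPInstance A V) (𝔸 : RelStruct A) : Prop :=
  ∀ C ∈ I.cons, C.FromTemplate 𝔸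

def CSPInstance.IsSolution (I : CSPInstance A V) (f : V → A) : Prop :=
  ∀ C ∈ I.cons, (fun x : ↥C.scope => f x.1) ∈ C.val

def CSPInstance.NonTrivial (I : CSPInstance A V) : Prop :=
  ∀ C ∈ I.cons, C.val.Nonempty

/-- The instance is `(k,ℓ)`-minimal. -/
def CSPInstance.Minimal (I : CSPInstance A V) (k ℓ : ℕ) : Prop :=
  (∀ S : Set V, S.ncard ≤ ℓ → ∃ C ∈ I.cons, S ⊆ C.scope) ∧
  (∀ m, m ≤ k → ∀ u : Fin m → V, ∀ C₁ ∈ I.cons, ∀ C₂ ∈ I.cons,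
    ∀ (h₁ : ∀ i, u i ∈ C₁.scope) (h₂ : ∀ i, u i ∈ C₂.scope),
      C₁.projOn u h₁ = C₂.projOn u h₂)

/-- The instance is an instance of `CSP_inj`. -/
def CSPInstance.InjInstance (I : CSPInstance A V) : Prop :=
  ∀ C ∈ I.cons, ∀ f ∈ C.val, ∀ x y : ↥C.scope, (x : V) ≠ (y : V) → f x ≠ f y

/-- `𝔸` has relational width `(k,ℓ)`. -/
def HasRelWidth (𝔸 : RelStruct A) (k ℓ : ℕ) : Prop :=
  ∀ (V : Type), Finite V → ∀ I J : CSPInstance A V,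
    I.IsInstanceOf 𝔸 →
    (∀ C ∈ J.cons, C.FromPPExpansion 𝔸 ℓ) →
    (∀ f : V → A, I.IsSolution f ↔ J.IsSolution f) →
    J.Minimal k ℓ → J.NonTrivial → ∃ f, J.IsSolution f

/-- `CSP_inj(𝔸)` has relational width `(k,ℓ)`. -/
def HasRelWidthInj (𝔸 : RelStruct A) (k ℓ : ℕ) : Prop :=
  ∀ (V : Type), Finite V → ∀ I J : CSPInstance A V,
    I.IsInstanceOf 𝔸 → I.InjInstance →
    (∀ C ∈ J.cons, C.FromPPExpansion 𝔸 ℓ) →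
    (∀ f : V → A, I.IsSolution f ↔ J.IsSolution f) →
    J.Minimal k ℓ → J.NonTrivial → ∃ f, J.IsSolution f

end CSP

namespace CSP

/-- All members of a quasi Jónsson chain have the same diagonal. -/
theorem IsQuasiJonssonChain.diag_eq {A : Type} {n : ℕ} {J : ℕ → A → A → A → A}
    (hJ : IsQuasiJonssonChain A n J) (x : A) {i : ℕ} (hi : 1 ≤ i) (hin : i ≤ 2 * n + 1) :
    J i x x x = J 1 x x x := by
  induction i, hi using Nat.le_induction with
  | base => rfl
  | succ i hi ih =>
    rw [← ih (by omega)]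
    obtain ⟨k, rfl | rfl⟩ := Nat.even_or_odd' i
    · exact (hJ.evenOdd k (by omega) (by omega) x x).symm
    · exact (hJ.oddEven (k + 1) (by omega) (by omega) x x).symm

/-- Composing with a fixed unary operation preserves the quasi Jónsson identities. -/
theorem IsQuasiJonssonChain.comp_left {A : Type} {n : ℕ} {J : ℕ → A → A → A → A}
    (hJ : IsQuasiJonssonChain A n J) (f : A → A) :
    IsQuasiJonssonChain A n (fun i x y z => f (J i x y z)) where
  first x y := congrArg f (hJ.first x y)
  middle i h₁ h₂ x y := congrArg f (hJ.middle i h₁ h₂ x y)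
  oddEven i h₁ h₂ x y := congrArg f (hJ.oddEven i h₁ h₂ x y)
  evenOdd i h₁ h₂ x y := congrArg f (hJ.evenOdd i h₁ h₂ x y)
  last x y := congrArg f (hJ.last x y)

/-- in an ω-categorical model-complete core preserved by a chain of quasi
Jónsson operations, the chain can be chosen idempotent on any prescribed finite set. -/
theorem statement_2 {A : Type} (𝔸 : RelStruct A) (hmc : IsModelCompleteCore 𝔸)
    (n : ℕ) (J : ℕ → A → A → A → A)
    (hJ : IsQuasiJonssonChain A n J)
    (hpol : ∀ i, 1 ≤ i → i ≤ 2 * n + 1 → IsTernPolymorphism 𝔸 (J i))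
    (B : Set A) (hB : B.Finite) :
    ∃ J' : ℕ → A → A → A → A, IsQuasiJonssonChain A n J' ∧
      (∀ i, 1 ≤ i → i ≤ 2 * n + 1 → IsTernPolymorphism 𝔸 (J' i)) ∧
      (∀ i, 1 ≤ i → i ≤ 2 * n + 1 → ∀ b ∈ B, J' i b b b = b) := by
  obtain ⟨g, hg, hgB⟩ := hmc.2 (fun x => J 1 x x x)
    (fun r hr t ht => hpol 1 le_rfl (by omega) r hr t t t ht ht ht) B hB
  refine ⟨fun i x y z => g.symm (J i x y z), hJ.comp_left g.symm, ?_, ?_⟩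
  · intro i h₁ h₂ r hr t₁ t₂ t₃ ht₁ ht₂ ht₃
    refine (hg r hr _).2 ?_
    simpa using hpol i h₁ h₂ r hr t₁ t₂ t₃ ht₁ ht₂ ht₃
  · intro i h₁ h₂ b hb
    rw [Equiv.symm_apply_eq, hgB b hb]
    exact hJ.diag_eq b h₁ h₂

end CSP
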